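/- arXiv:1203.1955 — 2 statements merged into one kernel-verified Lean document; each statement's English description precedes it below -/
import Mathlib

section
/- Let R be a commutative noetherian local ring, M a finitely generated R-module, a an element of R, n an integer and t a nonnegative integer. Suppose that a·Ext_R^n(X,M) = 0 and a·Ext_R^{n+1}(X,M) = 0 for every finitely generated R-module X whose dimension is at most t. Then a²·Ext_R^n(X,M) = 0 for every finitely generated R-module X whose dimension is at most t+1. -/
open CategoryTheory IsLocalRing

noncomputable section

/-- The `i`-th Tor module of two `R`-modules, as an object of `ModuleCat R`. -/
def TorMod (R : Type) [CommRing R] (i : ℕ) (M N : ModuleCat.{0} R) : ModuleCat.{0} R :=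
  ((Tor (ModuleCat.{0} R) i).obj M).obj N

/-- The `i`-th Ext module of two `R`-modules, as an object of `ModuleCat R`. -/
def ExtMod (R : Type) [CommRing R] (i : ℕ) (M N : ModuleCat.{0} R) : ModuleCat.{0} R :=
  ((Ext R (ModuleCat.{0} R) i).obj (Opposite.op M)).obj N

/-- Integer-indexed Tor: `Tor_n = 0` for `n < 0`. -/
def TorZ (R : Type) [CommRing R] (n : ℤ) (M N : ModuleCat.{0} R) : ModuleCat.{0} R :=
  if 0 ≤ n then TorMod R n.toNat M N else ModuleCat.of R PUnit

/-- Integer-indexed Ext: `Ext^n = 0` for `n < 0`. -/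
def ExtZ (R : Type) [CommRing R] (n : ℤ) (M N : ModuleCat.{0} R) : ModuleCat.{0} R :=
  if 0 ≤ n then ExtMod R n.toNat M N else ModuleCat.of R PUnit

/-- The depth of a module `N` over a local ring `S`, defined as the infimum of the set of
integers `i` such that `Ext^i(k, N) ≠ 0`, where `k` is the residue field of `S`
(`⊤` if no such `i` exists). -/
def moduleDepth (S : Type) [CommRing S] [IsLocalRing S] (N : Type) [AddCommGroup N]
    [Module S N] : ℕ∞ :=
  sInf {i : ℕ∞ | ∃ j : ℕ, i = (j : ℕ∞) ∧
    Nontrivial (ExtMod S j (ModuleCat.of S (ResidueField S)) (ModuleCat.of S N))}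

/-- A local ring is regular if it is noetherian and its maximal ideal can be generated by
(Krull dimension of `S`)-many elements. -/
def IsRegularLocal (S : Type) [CommRing S] [IsLocalRing S] : Prop :=
  IsNoetherianRing S ∧ ∃ s : Finset S, Ideal.span (s : Set S) = maximalIdeal S ∧
    (s.card : WithBot ℕ∞) = ringKrullDim S

/-- A local ring is Cohen-Macaulay if its depth (as a module over itself) equals its
Krull dimension. -/
def IsCMLocalRing (R : Type) [CommRing R] [IsLocalRing R] : Prop :=
  (moduleDepth R R : WithBot ℕ∞) = ringKrullDim R

/-- A module `M` over a local ring `R` is maximal Cohen-Macaulay if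
`depth M_p ≥ dim R_p` for every prime ideal `p` of `R`. -/
def IsMCMModule (R : Type) [CommRing R] [IsLocalRing R] (M : Type) [AddCommGroup M]
    [Module R M] : Prop :=
  ∀ (p : Ideal R) [p.IsPrime],
    ringKrullDim (Localization.AtPrime p) ≤
      (moduleDepth (Localization.AtPrime p) (LocalizedModule p.primeCompl M) : WithBot ℕ∞)

/-- Membership in `CM(R)`: finitely generated maximal Cohen-Macaulay modules. -/
def MemCM (R : Type) [CommRing R] [IsLocalRing R] (M : ModuleCat.{0} R) : Prop :=
  Module.Finite R M ∧ IsMCMModule R M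

/-- Membership in `CM₀(R)`: finitely generated maximal Cohen-Macaulay modules that are
locally free on the punctured spectrum. -/
def MemCM0 (R : Type) [CommRing R] [IsLocalRing R] (M : ModuleCat.{0} R) : Prop :=
  Module.Finite R M ∧ IsMCMModule R M ∧
    ∀ (p : Ideal R) [p.IsPrime], p ≠ maximalIdeal R →
      Module.Free (Localization.AtPrime p) (LocalizedModule p.primeCompl M)

/-- The singular locus of `R`: primes `p` such that `R_p` is not regular. -/
def singularLocus (R : Type) [CommRing R] : Set (PrimeSpectrum R) :=
  {p | ¬ IsRegularLocal (Localization.AtPrime p.asIdeal)}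

/-- The nonfree locus of a module `M`: primes `p` such that `M_p` is not a free
`R_p`-module. -/
def nonfreeLocus (R : Type) [CommRing R] (M : Type) [AddCommGroup M] [Module R M] :
    Set (PrimeSpectrum R) :=
  {p | ¬ Module.Free (Localization.AtPrime p.asIdeal)
        (LocalizedModule p.asIdeal.primeCompl M)}

/-- `K` is a first syzygy of `N` in a minimal free resolution: there is a surjection
`f : R^n → N` with `ker f ⊆ m·R^n` and `K ≅ ker f`. -/
def IsMinimalSyzygy1 (R : Type) [CommRing R] [IsLocalRing R] (N K : ModuleCat.{0} R) : Prop :=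
  ∃ (n : ℕ) (f : (Fin n → R) →ₗ[R] N), Function.Surjective f ∧
    LinearMap.ker f ≤ (maximalIdeal R) • (⊤ : Submodule R (Fin n → R)) ∧
    Nonempty (K ≃ₗ[R] LinearMap.ker f)

/-- `K` is a `d`-th syzygy of `N` in a minimal free resolution. -/
def IsMinimalSyzygy (R : Type) [CommRing R] [IsLocalRing R] :
    ℕ → ModuleCat.{0} R → ModuleCat.{0} R → Prop
  | 0, N, K => Nonempty ((K : Type) ≃ₗ[R] N)
  | d + 1, N, K => ∃ L : ModuleCat.{0} R, IsMinimalSyzygy1 R N L ∧ IsMinimalSyzygy R d L K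

/-- A module is indecomposable if it is nonzero and is not isomorphic to the direct sum of
two nonzero modules. -/
def IndecomposableModule (R : Type) [CommRing R] (M : Type) [AddCommGroup M] [Module R M] :
    Prop :=
  Nontrivial M ∧ ∀ (A B : Type) [AddCommGroup A] [Module R A] [AddCommGroup B] [Module R B],
    Nonempty (M ≃ₗ[R] A × B) → (Subsingleton A ∨ Subsingleton B)

/-!
Suppose that in dimension at most `t` the element `a` kills `Ext^n` and `b` kills `Ext^{n+1}`, and
let `m` be a maximal ideal and `dim X ≤ t + 1`. By prime avoidance some `x ∈ m` lies in no minimal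
prime of `Ann X` other than maximal ideals, so the kernel and the cokernel of every power `x ^ k`
on `X` have dimension at most `t`. Factoring `x ^ k : X → X` through its image gives two long exact
sequences: the first writes `a • e`, for `e ∈ Ext^n(X, M)`, as the pullback of a class `e'` of the
image, and the second writes `b • e'` as the restriction of a class on `X`. Hence
`(a * b) • e ∈ x ^ k Ext^n(X, M) ⊆ m ^ k Ext^n(X, M)` for all `k` and all `m`, and Krull's
intersection theorem forces `(a * b) • e = 0`.
-/

universe w v u t

section CommutativeAlgebra

variable {R : Type*} [CommRing R]

theorem ringKrullDim_quotient_le_of_isMaximal_of_le_minimalPrimes {I J : Ideal R} (hIJ : I ≤ J)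
    (hmin : ∀ p ∈ I.minimalPrimes, J ≤ p → p.IsMaximal) {t : ℕ}
    (hdim : ringKrullDim (R ⧸ I) ≤ (t + 1 : ℕ)) : ringKrullDim (R ⧸ J) ≤ t := by
  rw [ringKrullDim_quotient] at hdim ⊢
  refine iSup_le fun c => ?_
  rcases Nat.eq_zero_or_pos c.length with hc | hc
  · simp [hc]
  have head_not_isMaximal : ¬ c.head.1.asIdeal.IsMaximal := fun hmax =>
    have hlt : c.head.1.asIdeal < c.last.1.asIdeal := c.strictMono (show 0 < Fin.last _ from hc)
    hlt.ne (hmax.eq_of_le c.last.1.2.ne_top hlt.le)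
  obtain ⟨q, hq, hqc⟩ := Ideal.exists_minimalPrimes_le (hIJ.trans c.head.2)
  have hq_ne : q ≠ c.head.1.asIdeal := fun h =>
    head_not_isMaximal (h ▸ hmin q hq (h ▸ c.head.2))
  let c' : LTSeries (PrimeSpectrum.zeroLocus (I : Set R)) :=
    c.map (Set.inclusion (PrimeSpectrum.zeroLocus_anti_mono hIJ)) fun _ _ h => h
  let q' : PrimeSpectrum.zeroLocus (I : Set R) := ⟨⟨q, hq.1.1⟩, hq.1.2⟩
  have hq_lt : q' < c'.head := lt_of_le_of_ne hqc fun h => hq_ne (congrArg (·.1.asIdeal) h)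
  have hlength := (Order.LTSeries.length_le_krullDim (c'.cons q' hq_lt)).trans hdim
  rw [RelSeries.cons_length, Nat.cast_le] at hlength
  exact Nat.cast_le.2 (Nat.le_of_succ_le_succ hlength)

theorem exists_mem_forall_minimalPrimes_isMaximal_of_mem [IsNoetherianRing R] (I m : Ideal R)
    [m.IsMaximal] : ∃ x ∈ m, ∀ p ∈ I.minimalPrimes, x ∈ p → p.IsMaximal := by
  by_contra! hcover
  have hfin : {p ∈ I.minimalPrimes | ¬ p.IsMaximal}.Finite :=
    I.finite_minimalPrimes_of_isNoetherianRing.subset (Set.sep_subset _ _)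
  obtain ⟨p, hp, hmp⟩ := (Ideal.subset_union_prime_finite hfin (f := id) 0 0
    fun p hp _ _ => hp.1.1.1).1 fun x hx => by
      obtain ⟨p, hp, hxp, hmax⟩ := hcover x hx
      exact Set.mem_biUnion ⟨hp, hmax⟩ hxp
  exact hp.2 (‹m.IsMaximal›.eq_of_le hp.1.1.1.ne_top hmp ▸ ‹m.IsMaximal›)

theorem eq_zero_of_forall_isMaximal_mem_pow_smul_top [IsNoetherianRing R] {N : Type*}
    [AddCommGroup N] [Module R N] [Module.Finite R N] {z : N}
    (hz : ∀ m : Ideal R, m.IsMaximal → ∀ k : ℕ, z ∈ m ^ k • (⊤ : Submodule R N)) : z = 0 := by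
  rw [← Ideal.torsionOf_eq_top_iff (R := R)]
  by_contra hne
  obtain ⟨m, hm, hle⟩ := Ideal.exists_le_maximal _ hne
  obtain ⟨r, hr⟩ := (m.mem_iInf_smul_pow_eq_bot_iff z).1 (Submodule.mem_iInf _ |>.2 (hz m hm))
  have hr' : 1 - (r : R) ∈ m := hle (by simp [sub_smul, hr])
  exact hm.ne_top (m.eq_top_iff_one.2 (by simpa using m.add_mem hr' r.2))

end CommutativeAlgebra

section ExtKernelCokernel

open Limits Abelian

variable {C : Type u} [Category.{v} C] [Abelian C]

theorem shortExact_kernel_factorThruImage {X Y : C} (f : X ⟶ Y) :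
    (ShortComplex.mk (kernel.ι f) (Abelian.factorThruImage f)
      (by simp [← cancel_mono (Abelian.image.ι f)])).ShortExact where
  exact := ShortComplex.exact_of_f_is_kernel _ <|
    isKernelOfComp (Abelian.image.ι f) f (kernelIsKernel f) _ (Abelian.image.fac f)

theorem shortExact_image_cokernel {X Y : C} (f : X ⟶ Y) :
    (ShortComplex.mk (Abelian.image.ι f) (cokernel.π f) (kernel.condition _)).ShortExact where
  exact := ShortComplex.exact_kernel (cokernel.π f)

variable [HasExt.{w} C] {R : Type*} [CommRing R] [Linear R C]

theorem exists_mul_smul_eq_mk₀_comp {X Y M : C} (f : X ⟶ Y) {n : ℕ} {a b : R}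
    (ha : a ∈ Module.annihilator R (Abelian.Ext (kernel f) M n))
    (hb : b ∈ Module.annihilator R (Abelian.Ext (cokernel f) M (n + 1)))
    (e : Abelian.Ext X M n) :
    ∃ g : Abelian.Ext Y M n, (a * b) • e = (Ext.mk₀ f).comp g (zero_add n) := by
  rw [Module.mem_annihilator] at ha hb
  obtain ⟨e', he' : (Ext.mk₀ (Abelian.factorThruImage f)).comp e' _ = a • e⟩ :=
    Ext.contravariant_sequence_exact₂ (shortExact_kernel_factorThruImage f) M (a • e)
      (by rw [Ext.comp_smul]; exact ha _)
  obtain ⟨g, hg : (Ext.mk₀ (Abelian.image.ι f)).comp g _ = b • e'⟩ :=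
    Ext.contravariant_sequence_exact₁ (shortExact_image_cokernel f) M (b • e') (add_comm 1 n)
      (by rw [Ext.comp_smul]; exact hb _)
  refine ⟨g, ?_⟩
  calc (a * b) • e = b • a • e := by rw [mul_comm, mul_smul]
    _ = (Ext.mk₀ (Abelian.factorThruImage f)).comp
          ((Ext.mk₀ (Abelian.image.ι f)).comp g (zero_add n)) (zero_add n) := by
      rw [← he', hg, Ext.comp_smul]
    _ = (Ext.mk₀ f).comp g (zero_add n) := by
      rw [Ext.mk₀_comp_mk₀_assoc, Abelian.image.fac]

-- The endomorphism is a variable `f` because in `ModuleCat` the scalar action on morphisms agrees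
-- with that of `Linear` only up to unfolding, which is expensive inside `kernel` and `cokernel`.
theorem exists_mul_smul_eq_smul_ext {X M : C} {f : X ⟶ X} {y : R} (hf : f = y • 𝟙 X) {n : ℕ}
    {a b : R} (ha : a ∈ Module.annihilator R (Abelian.Ext (kernel f) M n))
    (hb : b ∈ Module.annihilator R (Abelian.Ext (cokernel f) M (n + 1)))
    (e : Abelian.Ext X M n) : ∃ g : Abelian.Ext X M n, (a * b) • e = y • g := by
  obtain ⟨g, hg⟩ := exists_mul_smul_eq_mk₀_comp f ha hb e
  exact ⟨g, by rw [hg, hf, Ext.mk₀_smul, Ext.smul_comp, Ext.mk₀_id_comp]⟩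

end ExtKernelCokernel

section ModuleCat

open Limits

variable {R : Type u} [CommRing R] (X : ModuleCat.{v} R)

theorem mem_annihilator_kernel_smul_id (y : R) :
    y ∈ Module.annihilator R (kernel (y • 𝟙 X) :) := by
  refine Module.mem_annihilator.2 fun z => ?_
  apply (ModuleCat.mono_iff_injective (kernel.ι (y • 𝟙 X))).1 inferInstance
  simpa using ConcreteCategory.congr_hom (kernel.condition (y • 𝟙 X)) z

theorem mem_annihilator_cokernel_smul_id (y : R) :
    y ∈ Module.annihilator R (cokernel (y • 𝟙 X) :) := by
  refine Module.mem_annihilator.2 fun z => ?_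
  obtain ⟨x, rfl⟩ := (ModuleCat.epi_iff_surjective (cokernel.π (y • 𝟙 X))).1 inferInstance z
  rw [← map_smul]
  exact ConcreteCategory.congr_hom (cokernel.condition (y • 𝟙 X)) x

theorem mul_mem_annihilator_ext_of_ringKrullDim_le_succ [Small.{v} R] [IsNoetherianRing R]
    {M : ModuleCat.{v} R} [Module.Finite R M] {a b : R} {n t : ℕ}
    (h : ∀ K : ModuleCat.{v} R, Module.Finite R K →
      ringKrullDim (R ⧸ Module.annihilator R K) ≤ t →
      a ∈ Module.annihilator R (Abelian.Ext K M n) ∧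
        b ∈ Module.annihilator R (Abelian.Ext K M (n + 1)))
    [Module.Finite R X]
    (hX : ringKrullDim (R ⧸ Module.annihilator R X) ≤ (t + 1 : ℕ)) :
    a * b ∈ Module.annihilator R (Abelian.Ext X M n) := by
  refine Module.mem_annihilator.2 fun e =>
    eq_zero_of_forall_isMaximal_mem_pow_smul_top (R := R) fun m _ k => ?_
  obtain ⟨x, hxm, hx⟩ :=
    exists_mem_forall_minimalPrimes_isMaximal_of_mem (Module.annihilator R X) m
  have hdim {K : ModuleCat.{v} R} (hXK : Module.annihilator R X ≤ Module.annihilator R K)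
      (hxK : x ^ k ∈ Module.annihilator R K) : ringKrullDim (R ⧸ Module.annihilator R K) ≤ t :=
    ringKrullDim_quotient_le_of_isMaximal_of_le_minimalPrimes hXK
      (fun p hp hKp => hx p hp (hp.1.1.mem_of_pow_mem k (hKp hxK))) hX
  have hι : Function.Injective (kernel.ι (x ^ k • 𝟙 X)).hom :=
    (ModuleCat.mono_iff_injective _).1 inferInstance
  have hπ : Function.Surjective (cokernel.π (x ^ k • 𝟙 X)).hom :=
    (ModuleCat.epi_iff_surjective _).1 inferInstance
  have hker := hdim (LinearMap.annihilator_le_of_injective _ hι)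
    (mem_annihilator_kernel_smul_id X _)
  have hcoker := hdim (LinearMap.annihilator_le_of_surjective _ hπ)
    (mem_annihilator_cokernel_smul_id X _)
  have ha := (h _ (.of_injective _ hι) hker).1
  have hb := (h _ (.of_surjective _ hπ) hcoker).2
  obtain ⟨g, hg⟩ :=
    exists_mul_smul_eq_smul_ext (f := x ^ k • 𝟙 X) (y := x ^ k) (by ext; rfl) ha hb e
  rw [hg]
  exact Submodule.smul_mem_smul (Ideal.pow_mem_pow hxm k) Submodule.mem_top

end ModuleCat

section DerivedExtComparison

open Limits

variable {R : Type t} [Ring R] {C : Type u} [Category.{v} C] [Abelian C] [Linear R C]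
  {X : C} (P : ProjectiveResolution X) (Y : C) (n : ℕ)

variable (R) in
theorem linearYonedaObj_sc_g_apply_eq_zero_iff (f : P.complex.X n ⟶ Y) :
    ((P.complex.linearYonedaObj R Y).sc n).g f = 0 ↔ P.complex.d (n + 1) n ≫ f = 0 := by
  change (P.complex.linearYonedaObj R Y).d n ((ComplexShape.up ℕ).next n) f = 0 ↔ _
  rw [CochainComplex.next]
  rfl

variable [HasExt.{w} C]

variable {Y} in
theorem extMk_degree_zero_eq_zero_iff (f : P.complex.X 0 ⟶ Y) (hf : P.complex.d 1 0 ≫ f = 0) :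
    P.extMk f 1 rfl hf = 0 ↔ f = 0 := by
  rw [← P.extEquivCohomologyClass.apply_eq_iff_eq, P.extEquivCohomologyClass_extMk,
    P.extEquivCohomologyClass_zero, CochainComplex.HomComplex.CohomologyClass.mk_eq_zero_iff,
    CochainComplex.HomComplex.Cocycle.toSingleMk_mem_coboundaries_iff _ _ _ _ _ 1 (by simp)]
  have hX : IsZero (P.cochainComplex.X 1) :=
    CochainComplex.isZero_of_isStrictlyLE _ 0 _ (by norm_num)
  constructor
  · rintro ⟨g, hg⟩
    rw [hX.eq_of_src g 0, comp_zero] at hg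
    exact (cancel_epi (P.cochainComplexXIso (-(0 : ℕ)) 0 rfl).hom).1 (by rw [← hg, comp_zero])
  · rintro rfl
    exact ⟨0, by simp⟩

variable {Y n} in
theorem smul_extMk (r : R) (f : P.complex.X n ⟶ Y) (hf : P.complex.d (n + 1) n ≫ f = 0) :
    r • P.extMk f (n + 1) rfl hf =
      P.extMk (r • f) (n + 1) rfl (by rw [Linear.comp_smul, hf, smul_zero]) := by
  rw [Abelian.Ext.smul_eq_comp_mk₀, P.extMk_comp_mk₀]
  congr 1
  rw [Linear.comp_smul, Category.comp_id]

variable (R) in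
theorem extMk_eq_zero_iff_exists_sc_f (f : P.complex.X n ⟶ Y)
    (hf : P.complex.d (n + 1) n ≫ f = 0) :
    P.extMk f (n + 1) rfl hf = 0 ↔ ∃ g, ((P.complex.linearYonedaObj R Y).sc n).f g = f := by
  cases n with
  | zero =>
    have hzero : ((P.complex.linearYonedaObj R Y).sc 0).f = 0 :=
      (P.complex.linearYonedaObj R Y).shape _ 0 (by simp)
    rw [extMk_degree_zero_eq_zero_iff, hzero]
    exact ⟨fun h => ⟨0, h.symm⟩, fun ⟨_, h⟩ => h.symm⟩
  | succ p =>
    rw [P.extMk_eq_zero_iff _ _ _ _ p rfl]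
    change _ ↔ ∃ g, (P.complex.linearYonedaObj R Y).d ((ComplexShape.up ℕ).prev (p + 1)) _ g = f
    rw [CochainComplex.prev_nat_succ]
    rfl

variable (R) in
/-- The map sending a degree-`n` cocycle of `Hom(P, Y)` to its class in `Ext^n(X, Y)`, where `P` is
a projective resolution of `X`. Cocycles are encoded as the kernel of the concrete differential, so
that homology is the quotient by the range of `ShortComplex.moduleCatToCycles`. -/
def extMkLinearMap :
    LinearMap.ker ((P.complex.linearYonedaObj R Y).sc n).g.hom →ₗ[R] Abelian.Ext X Y n where
  toFun f :=
    P.extMk f.1 (n + 1) rfl ((linearYonedaObj_sc_g_apply_eq_zero_iff R P Y n f.1).1 f.2)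
  map_add' f g := (P.add_extMk f.1 g.1 (n + 1) rfl _ _).symm
  map_smul' r f := (smul_extMk P r f.1 _).symm

theorem extMkLinearMap_surjective : Function.Surjective (extMkLinearMap R P Y n) := fun x => by
  obtain ⟨f, hf, rfl⟩ := P.extMk_surjective x (n + 1) rfl
  exact ⟨⟨f, (linearYonedaObj_sc_g_apply_eq_zero_iff R P Y n f).2 hf⟩, rfl⟩

theorem ker_extMkLinearMap : LinearMap.ker (extMkLinearMap R P Y n) =
    LinearMap.range ((P.complex.linearYonedaObj R Y).sc n).moduleCatToCycles := by
  ext ⟨f, hf⟩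
  have hf' := (linearYonedaObj_sc_g_apply_eq_zero_iff R P Y n f).1 hf
  exact (extMk_eq_zero_iff_exists_sc_f R P Y n f hf').trans
    (exists_congr fun _ => ⟨fun h => Subtype.ext h, congrArg Subtype.val⟩)

variable (R) in
/-- The cohomology of `Hom(P, Y)`, for a projective resolution `P` of `X`, computes the `Ext` of the
derived category `R`-linearly. -/
def linearYonedaHomologyEquivExt :
    (P.complex.linearYonedaObj R Y).homology n ≃ₗ[R] Abelian.Ext X Y n :=
  ((P.complex.linearYonedaObj R Y).sc n).moduleCatHomologyIso.toLinearEquiv ≪≫ₗ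
    Submodule.quotEquivOfEq _ _ (ker_extMkLinearMap P Y n).symm ≪≫ₗ
    (extMkLinearMap R P Y n).quotKerEquivOfSurjective (extMkLinearMap_surjective P Y n)

variable (R X) in
/-- The comparison between `Ext` as a derived functor and `Ext` as morphisms in the derived
category; only the latter comes with long exact sequences in Mathlib. -/
def derivedExtEquivExt [EnoughProjectives C] :
    ((Ext R C n).obj (Opposite.op X)).obj Y ≃ₗ[R] Abelian.Ext X Y n :=
  ((projectiveResolution X).isoExt n Y).toLinearEquiv ≪≫ₗ
    linearYonedaHomologyEquivExt R (projectiveResolution X) Y n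

end DerivedExtComparison

theorem annihilator_extZ_natCast (R : Type) [CommRing R] (n : ℕ) (X M : ModuleCat.{0} R) :
    Module.annihilator R (ExtZ R n X M) = Module.annihilator R (Abelian.Ext X M n) := by
  rw [ExtZ, if_pos n.cast_nonneg, Int.toNat_natCast]
  exact (derivedExtEquivExt R X M n).annihilator_eq

theorem subsingleton_extZ_of_neg (R : Type) [CommRing R] {n : ℤ} (hn : n < 0)
    (X M : ModuleCat.{0} R) : Subsingleton (ExtZ R n X M) := by
  rw [ExtZ, if_neg hn.not_ge]
  exact inferInstanceAs (Subsingleton PUnit)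

theorem stmt2_general (R : Type) [CommRing R] [IsNoetherianRing R]
    (M : ModuleCat.{0} R) [Module.Finite R M] (a b : R) (n : ℤ) (t : ℕ)
    (h : ∀ X : ModuleCat.{0} R, Module.Finite R X →
        ringKrullDim (R ⧸ Module.annihilator R X) ≤ (t : WithBot ℕ∞) →
        (∀ x : ExtZ R n X M, a • x = 0) ∧ (∀ x : ExtZ R (n + 1) X M, b • x = 0)) :
    ∀ X : ModuleCat.{0} R, Module.Finite R X →
      ringKrullDim (R ⧸ Module.annihilator R X) ≤ ((t + 1 : ℕ) : WithBot ℕ∞) →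
      ∀ x : ExtZ R n X M, (a * b) • x = 0 := by
  intro X _ hX
  rcases lt_or_ge n 0 with hn | hn
  · have := subsingleton_extZ_of_neg R hn X M
    exact fun x => Subsingleton.elim _ _
  · lift n to ℕ using hn
    rw [← Module.mem_annihilator, annihilator_extZ_natCast]
    refine mul_mem_annihilator_ext_of_ringKrullDim_le_succ X (fun K hK hdim => ?_) hX
    rw [← annihilator_extZ_natCast, ← annihilator_extZ_natCast, Module.mem_annihilator,
      Module.mem_annihilator]
    exact h K hK hdim

/-- If `a · Ext^n(X,M) = 0` and `a · Ext^{n+1}(X,M) = 0` for every finitely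
generated `R`-module `X` of dimension at most `t`, then `a² · Ext^n(X,M) = 0` for every
finitely generated `R`-module `X` of dimension at most `t + 1`. -/
theorem stmt2 (R : Type) [CommRing R] [IsNoetherianRing R] [IsLocalRing R]
    (M : ModuleCat.{0} R) (hM : Module.Finite R M) (a : R) (n : ℤ) (t : ℕ)
    (h : ∀ X : ModuleCat.{0} R, Module.Finite R X →
        ringKrullDim (R ⧸ Module.annihilator R X) ≤ (t : WithBot ℕ∞) →
        (∀ x : ExtZ R n X M, a • x = 0) ∧ (∀ x : ExtZ R (n + 1) X M, a • x = 0)) :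
    ∀ X : ModuleCat.{0} R, Module.Finite R X →
      ringKrullDim (R ⧸ Module.annihilator R X) ≤ ((t + 1 : ℕ) : WithBot ℕ∞) →
      ∀ x : ExtZ R n X M, (a ^ 2) • x = 0 :=
  sq a ▸ stmt2_general R M a a n t h

end
end

section
/- Let R be a commutative noetherian local ring of Krull dimension d, let a be an element of R and n an integer. Suppose that a·Tor_i^R(M,N) = 0 for all integers i with n−2d ≤ i ≤ n and all finitely generated R-modules M and N of finite length. Then a^{2^{2d}}·Tor_n^R(M,N) = 0 for all finitely generated R-modules M and N. -/
open CategoryTheory IsLocalRing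

noncomputable section

/-!
Let `T` be a linear half-exact functor that preserves finite generation, and suppose that `a` kills
`T` on modules of finite length. Then `a ^ r` kills `T M` whenever `dim M < r`: dividing `M` by its
largest submodule of finite length costs one factor `a` and makes some `y` in the maximal ideal
regular on `M`. By induction `a ^ (r - 1)` kills every `T (M / y ^ k M)`, so
`a ^ (r - 1) • T M ⊆ y ^ k • T M` for all `k`, and this intersection vanishes by Krull's theorem.
Applying this to `Tor n`, first in one variable and then in the other, gives the exponent
`(d + 1) ^ 2`, which is at most `2 ^ (2 * d)`.

Half-exactness of `Tor n` in the first variable is the long exact homology sequence of a flat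
resolution of the second. In the second variable it follows by dimension shifting: for
`0 ⟶ K ⟶ F ⟶ X ⟶ 0` with `F` flat, `Tor (n + 1) X` is the kernel of `Tor n K ⟶ Tor n F`, and a
kernel of a map from a half-exact functor to one preserving monomorphisms is half exact.
-/

universe u v w

section FiniteLength

theorem isFiniteLength_comap {R M N : Type*} [Ring R] [AddCommGroup M] [Module R M]
    [AddCommGroup N] [Module R N] {f : M →ₗ[R] N} (hf : IsFiniteLength R (LinearMap.ker f))
    {L : Submodule R N} (hL : IsFiniteLength R L) : IsFiniteLength R (L.comap f) := by
  rw [isFiniteLength_iff_isNoetherian_isArtinian] at hf hL ⊢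
  obtain ⟨_, _⟩ := hf
  obtain ⟨_, _⟩ := hL
  have hker : LinearMap.ker f ≤ L.comap f := LinearMap.ker_le_comap f
  have hexact : LinearMap.range (Submodule.inclusion hker) =
      LinearMap.ker (f.submoduleComap L) := by
    ext x
    simp [Submodule.range_inclusion, Subtype.ext_iff]
  exact ⟨isNoetherian_of_range_eq_ker _ _ hexact, isArtinian_of_range_eq_ker _ _ hexact⟩

theorem exists_isFiniteLength_subsingleton_residueField_hom_quotient (R M : Type*) [CommRing R]
    [IsLocalRing R] [AddCommGroup M] [Module R M] [IsNoetherian R M] :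
    ∃ G : Submodule R M, IsFiniteLength R G ∧ Subsingleton (ResidueField R →ₗ[R] M ⧸ G) := by
  obtain ⟨G, hG, hmax⟩ := set_has_maximal_iff_noetherian.mpr ‹IsNoetherian R M›
    {G : Submodule R M | IsFiniteLength R G} ⟨⊥, IsFiniteLength.of_subsingleton⟩
  refine ⟨G, hG, subsingleton_of_forall_eq 0 fun f ↦ ?_⟩
  have hsimple : IsSimpleModule R (ResidueField R) :=
    isSimpleModule_iff_isCoatom.mpr (maximalIdeal.isMaximal R).out
  have hrange : IsFiniteLength R (LinearMap.range f) :=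
    (isFiniteLength_iff_isNoetherian_isArtinian.mpr ⟨inferInstance, inferInstance⟩ :
      IsFiniteLength R (ResidueField R)).of_surjective f.surjective_rangeRestrict
  have hG' : IsFiniteLength R ((LinearMap.range f).comap G.mkQ) :=
    isFiniteLength_comap (by rwa [G.ker_mkQ]) hrange
  have hle : G ≤ (LinearMap.range f).comap G.mkQ := G.ker_mkQ.ge.trans (LinearMap.ker_le_comap _)
  have heq : G = (LinearMap.range f).comap G.mkQ := hle.eq_of_not_lt (hmax _ hG')
  rw [← LinearMap.range_eq_bot, ← Submodule.map_comap_eq_of_surjective G.mkQ_surjective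
    (LinearMap.range f), ← heq, G.mkQ_map_self]

theorem exists_isFiniteLength_isSMulRegular_quotient (R M : Type*) [CommRing R]
    [IsNoetherianRing R] [IsLocalRing R] [AddCommGroup M] [Module R M] [Module.Finite R M] :
    ∃ G : Submodule R M, IsFiniteLength R G ∧
      ∃ y ∈ maximalIdeal R, IsSMulRegular (M ⧸ G) y := by
  obtain ⟨G, hG, hhom⟩ := exists_isFiniteLength_subsingleton_residueField_hom_quotient R M
  obtain ⟨y, hy, hreg⟩ := IsSMulRegular.subsingleton_linearMap_iff.mp hhom
  exact ⟨G, hG, y, Ideal.annihilator_quotient.le hy, hreg⟩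

end FiniteLength

section HalfExact

variable {R : Type u} [CommRing R] {T : ModuleCat.{v} R ⥤ ModuleCat.{w} R}

/-- A functor between module categories is half exact if it carries short exact sequences to
sequences that are exact in the middle. -/
def IsHalfExact (T : ModuleCat.{v} R ⥤ ModuleCat.{w} R) : Prop :=
  ∀ ⦃S : ShortComplex (ModuleCat.{v} R)⦄, S.ShortExact →
    Function.Exact (T.map S.f) (T.map S.g)

theorem IsHalfExact.exists_map_f_eq_smul (hT : IsHalfExact T)
    {S : ShortComplex (ModuleCat.{v} R)} (hS : S.ShortExact) {c : R}
    (hc : c ∈ Module.annihilator R (T.obj S.X₃)) (x : T.obj S.X₂) :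
    ∃ w : T.obj S.X₁, T.map S.f w = c • x :=
  (hT hS (c • x)).mp (by rw [map_smul, Module.mem_annihilator.mp hc])

theorem IsHalfExact.mul_mem_annihilator (hT : IsHalfExact T)
    {S : ShortComplex (ModuleCat.{v} R)} (hS : S.ShortExact) {a c : R}
    (ha : a ∈ Module.annihilator R (T.obj S.X₁)) (hc : c ∈ Module.annihilator R (T.obj S.X₃)) :
    a * c ∈ Module.annihilator R (T.obj S.X₂) := by
  refine Module.mem_annihilator.mpr fun x ↦ ?_
  obtain ⟨w, hw⟩ := hT.exists_map_f_eq_smul hS hc x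
  rw [mul_smul, ← hw, ← map_smul, Module.mem_annihilator.mp ha, map_zero]

theorem map_smul_id_apply [T.Linear R] (M : ModuleCat.{v} R) (r : R) (x : T.obj M) :
    T.map (r • 𝟙 M) x = r • x := by
  rw [T.map_smul, T.map_id]
  rfl

theorem subsingleton_obj_of_subsingleton [T.Linear R] (M : ModuleCat.{v} R) [Subsingleton M] :
    Subsingleton (T.obj M) := by
  refine subsingleton_of_forall_eq 0 fun x ↦ ?_
  have hid : (1 : R) • 𝟙 M = (0 : R) • 𝟙 M := by
    ext m
    exact Subsingleton.elim _ _
  rw [← one_smul R x, ← map_smul_id_apply, hid, map_smul_id_apply, zero_smul]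

theorem IsHalfExact.smul_mem_span_smul_top [T.Linear R] (hT : IsHalfExact T) {M : ModuleCat.{v} R}
    {y c : R} (hy : IsSMulRegular M y)
    (hc : c ∈ Module.annihilator R (T.obj (ModuleCat.of R (QuotSMulTop y M)))) (x : T.obj M) :
    c • x ∈ Ideal.span {y} • (⊤ : Submodule R (T.obj M)) := by
  obtain ⟨w, hw⟩ : ∃ w : T.obj M, T.map (y • 𝟙 M) w = c • x :=
    hT.exists_map_f_eq_smul hy.smulShortComplex_shortExact hc x
  rw [← hw, map_smul_id_apply]
  exact Submodule.smul_mem_smul (Ideal.mem_span_singleton_self y) Submodule.mem_top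

theorem function_exact_of_iso {A B C A' B' C' : ModuleCat.{w} R} (e₁ : A ≅ A') (e₂ : B ≅ B')
    (e₃ : C ≅ C') {f : A ⟶ B} {g : B ⟶ C} {f' : A' ⟶ B'} {g' : B' ⟶ C'}
    (hf : f ≫ e₂.hom = e₁.hom ≫ f') (hg : g ≫ e₃.hom = e₂.hom ≫ g')
    (h : Function.Exact f' g') : Function.Exact f g :=
  (Function.Exact.iff_of_ladder_linearEquiv (e₁ := e₁.toLinearEquiv) (e₂ := e₂.toLinearEquiv)
    (e₃ := e₃.toLinearEquiv) (f₁₂ := f.hom) (f₂₃ := g.hom) (g₁₂ := f'.hom) (g₂₃ := g'.hom)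
    (congrArg ModuleCat.Hom.hom hf.symm) (congrArg ModuleCat.Hom.hom hg.symm)).mp h

theorem IsHalfExact.of_iso {T' : ModuleCat.{v} R ⥤ ModuleCat.{w} R} (hT : IsHalfExact T)
    (e : T' ≅ T) : IsHalfExact T' := fun S hS ↦
  function_exact_of_iso (e.app S.X₁) (e.app S.X₂) (e.app S.X₃) (e.hom.naturality S.f)
    (e.hom.naturality S.g) (hT hS)

variable [IsNoetherianRing R] [IsLocalRing R]

theorem IsHalfExact.mem_annihilator_of_isSMulRegular [T.Linear R] (hT : IsHalfExact T)
    {M : ModuleCat.{v} R} [Module.Finite R (T.obj M)] {y c : R} (hy : y ∈ maximalIdeal R)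
    (hreg : IsSMulRegular M y)
    (hc : ∀ k : ℕ, k ≠ 0 →
      c ∈ Module.annihilator R (T.obj (ModuleCat.of R (QuotSMulTop (y ^ k) M)))) :
    c ∈ Module.annihilator R (T.obj M) := by
  refine Module.mem_annihilator.mpr fun x ↦ ?_
  rw [← Submodule.mem_bot R, ← Ideal.iInf_pow_smul_eq_bot_of_isLocalRing (M := T.obj M)
    (Ideal.span {y}) (ne_top_of_le_ne_top (Ideal.IsPrime.ne_top inferInstance)
      ((Ideal.span_singleton_le_iff_mem _).mpr hy)), Submodule.mem_iInf]
  intro k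
  rcases eq_or_ne k 0 with rfl | hk
  · simp
  · rw [Ideal.span_singleton_pow]
    exact hT.smul_mem_span_smul_top (hreg.pow k) (hc k hk) x

theorem IsHalfExact.pow_mem_annihilator_of_supportDim_lt [T.Linear R] (hT : IsHalfExact T)
    (hfin : ∀ M : ModuleCat.{v} R, Module.Finite R M → Module.Finite R (T.obj M)) {a : R}
    (ha : ∀ M : ModuleCat.{v} R, IsFiniteLength R M → a ∈ Module.annihilator R (T.obj M)) (r : ℕ)
    (M : ModuleCat.{v} R) [Module.Finite R M] (hr : Module.supportDim R M < r) :
    a ^ r ∈ Module.annihilator R (T.obj M) := by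
  induction r generalizing M with
  | zero =>
    have := (Module.supportDim_eq_bot_iff_subsingleton R M).mp (WithBot.lt_coe_bot.mp hr)
    have := subsingleton_obj_of_subsingleton (T := T) M
    exact Module.mem_annihilator.mpr fun x ↦ Subsingleton.elim _ _
  | succ r ih =>
    obtain ⟨G, hG, y, hy, hreg⟩ := exists_isFiniteLength_isSMulRegular_quotient R M
    have hquot : a ^ r ∈ Module.annihilator R (T.obj (ModuleCat.of R (M ⧸ G))) := by
      have := hfin (ModuleCat.of R (M ⧸ G)) inferInstance
      refine hT.mem_annihilator_of_isSMulRegular hy hreg fun k hk ↦ ih _ ?_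
      have hdim : Module.supportDim R (QuotSMulTop (y ^ k) (M ⧸ G)) + 1 < r + 1 :=
        calc Module.supportDim R (QuotSMulTop (y ^ k) (M ⧸ G)) + 1
          _ = Module.supportDim R (M ⧸ G) :=
            Module.supportDim_quotSMulTop_succ_eq_supportDim (hreg.pow k)
              (Ideal.pow_mem_of_mem _ hy _ (Nat.pos_of_ne_zero hk))
          _ ≤ Module.supportDim R M := Module.supportDim_le_of_surjective G.mkQ G.mkQ_surjective
          _ < r + 1 := mod_cast hr
      exact lt_of_add_lt_add_right hdim
    rw [pow_succ']
    exact hT.mul_mem_annihilator (LinearMap.shortExact_shortComplexKer G.mkQ_surjective)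
      (ha _ (show IsFiniteLength R (LinearMap.ker G.mkQ) by rwa [G.ker_mkQ])) hquot

end HalfExact

section NatTrans

variable {R : Type u} [CommRing R] {F G H : ModuleCat.{v} R ⥤ ModuleCat.{w} R}
  {δ : F ⟶ G} {φ : G ⟶ H}

theorem linear_of_injective_natTrans (hδ : ∀ N, Function.Injective (δ.app N)) [G.Linear R] :
    F.Linear R where
  map_smul {M N} f r := by
    have : Mono (δ.app N) := (ModuleCat.mono_iff_injective _).mpr (hδ N)
    rw [← cancel_mono (δ.app N), Linear.smul_comp, δ.naturality, δ.naturality, G.map_smul,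
      Linear.comp_smul]

theorem IsHalfExact.of_natTrans_kernel (hG : IsHalfExact G) [H.PreservesMonomorphisms]
    (hδ : ∀ N, Function.Injective (δ.app N))
    (hexact : ∀ N, Function.Exact (δ.app N) (φ.app N)) : IsHalfExact F := by
  intro S hS b
  have hH : Function.Injective (H.map S.f) := by
    have := hS.mono_f
    exact (ModuleCat.mono_iff_injective _).mp inferInstance
  constructor
  · intro hb
    have hδb : G.map S.g (δ.app S.X₂ b) = 0 := by
      rw [← NatTrans.naturality_apply, hb, map_zero]
    obtain ⟨y, hy⟩ := (hG hS _).mp hδb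
    have hφy : φ.app S.X₁ y = 0 := hH <| by
      rw [← NatTrans.naturality_apply, hy, (hexact _).apply_apply_eq_zero, map_zero]
    obtain ⟨c, rfl⟩ := (hexact _ y).mp hφy
    exact ⟨c, hδ _ (by rw [NatTrans.naturality_apply, hy])⟩
  · rintro ⟨c, rfl⟩
    apply hδ
    rw [NatTrans.naturality_apply, NatTrans.naturality_apply, (hG hS).apply_apply_eq_zero, map_zero]

end NatTrans

instance homologyFunctor_linear {C ι : Type*} [Category C] [Preadditive C]
    [CategoryWithHomology C] (R : Type*) [Semiring R] [Linear R C] (c : ComplexShape ι) (i : ι) :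
    (HomologicalComplex.homologyFunctor C c i).Linear R where
  map_smul f r :=
    ShortComplex.homologyMap_smul ((HomologicalComplex.shortComplexFunctor C c i).map f) r

section TensorComplex

open MonoidalCategory

variable {R : Type u} [CommRing R]

/-- The functor `K ↦ (X ↦ X ⊗ K)`, sending a chain complex `K` of modules to the functor
tensoring with `K`. -/
def tensorComplex : ChainComplex (ModuleCat.{u} R) ℕ ⥤
    ModuleCat.{u} R ⥤ ChainComplex (ModuleCat.{u} R) ℕ where
  obj K :=
    { obj X := (((tensoringLeft (ModuleCat.{u} R)).obj X).mapHomologicalComplex _).obj K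
      map f := (NatTrans.mapHomologicalComplex ((tensoringLeft (ModuleCat.{u} R)).map f) _).app K }
  map φ :=
    { app X := (((tensoringLeft (ModuleCat.{u} R)).obj X).mapHomologicalComplex _).map φ }

variable (K : ChainComplex (ModuleCat.{u} R) ℕ)

instance tensorComplex_obj_linear : (tensorComplex.obj K).Linear R where
  map_smul {X Y} f r := by
    refine HomologicalComplex.hom_ext _ _ fun i ↦ ?_
    change (r • f) ▷ K.X i = r • (f ▷ K.X i)
    exact MonoidalLinear.smul_whiskerRight r f _

instance tensorComplex_obj_preservesZeroMorphisms :
    (tensorComplex.obj K).PreservesZeroMorphisms where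
  map_zero X Y := by
    refine HomologicalComplex.hom_ext _ _ fun i ↦ ?_
    change (0 : X ⟶ Y) ▷ K.X i = 0
    exact MonoidalPreadditive.zero_whiskerRight

variable {K}

theorem tensorComplex_shortExact (hK : ∀ i, Module.Flat R (K.X i))
    {S : ShortComplex (ModuleCat.{u} R)} (hS : S.ShortExact) :
    (S.map (tensorComplex.obj K)).ShortExact :=
  HomologicalComplex.shortExact_of_degreewise_shortExact _ fun i ↦
    have := hK i
    hS.map_of_exact (tensorRight (K.X i))

end TensorComplex

section Tor

open MonoidalCategory

variable {R : Type u} [CommRing R]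

theorem flat_projectiveResolution_X {N : ModuleCat.{u} R} (P : ProjectiveResolution N) (i : ℕ) :
    Module.Flat R (P.complex.X i) :=
  have : Module.Projective R (P.complex.X i) := (IsProjective.iff_projective _).mpr (P.projective i)
  inferInstance

/-- The functor `X ↦ X ⊗ P` for the chosen projective resolution `P` of `N`; its homology is
`Tor X N`. -/
abbrev torComplex (N : ModuleCat.{u} R) : ModuleCat.{u} R ⥤ ChainComplex (ModuleCat.{u} R) ℕ :=
  tensorComplex.obj (projectiveResolution N).complex

/-- The map `X ⊗ P ⟶ X ⊗ Q` induced by a lift of `f : M ⟶ N` to the chosen projective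
resolutions `P` of `M` and `Q` of `N`. -/
abbrev torComplexMap {M N : ModuleCat.{u} R} (f : M ⟶ N) : torComplex M ⟶ torComplex N :=
  tensorComplex.map
    (ProjectiveResolution.lift f (projectiveResolution M) (projectiveResolution N))

theorem torComplex_shortExact {S : ShortComplex (ModuleCat.{u} R)} (hS : S.ShortExact)
    (N : ModuleCat.{u} R) : (S.map (torComplex N)).ShortExact :=
  tensorComplex_shortExact (flat_projectiveResolution_X _) hS

/-- The computation of `Tor n X N` as the homology of `X ⊗ P`, where `P` is the chosen projective
resolution of `N`. -/
def torIso (n : ℕ) (X N : ModuleCat.{u} R) :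
    ((Tor (ModuleCat.{u} R) n).obj X).obj N ≅ ((torComplex N).obj X).homology n :=
  (projectiveResolution N).isoLeftDerivedObj ((tensoringLeft _).obj X) n

theorem torIso_hom_naturality_left (n : ℕ) {X Y : ModuleCat.{u} R} (f : X ⟶ Y)
    (N : ModuleCat.{u} R) :
    ((Tor (ModuleCat.{u} R) n).map f).app N ≫ (torIso n Y N).hom =
      (torIso n X N).hom ≫ HomologicalComplex.homologyMap ((torComplex N).map f) n := by
  rw [← Iso.eq_comp_inv, Category.assoc]
  exact ProjectiveResolution.leftDerived_app_eq ((tensoringLeft _).map f) _ n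

theorem torIso_hom_naturality_right (n : ℕ) (X : ModuleCat.{u} R) {M N : ModuleCat.{u} R}
    (f : M ⟶ N) :
    ((Tor (ModuleCat.{u} R) n).obj X).map f ≫ (torIso n X N).hom =
      (torIso n X M).hom ≫ HomologicalComplex.homologyMap ((torComplexMap f).app X) n :=
  ProjectiveResolution.isoLeftDerivedObj_hom_naturality f _ _ _
    (ProjectiveResolution.lift_commutes_zero f _ _) _ n

/-- `torIso` as an isomorphism of functors of the first variable. -/
def torFlipIso (n : ℕ) (N : ModuleCat.{u} R) :
    (Tor (ModuleCat.{u} R) n).flip.obj N ≅ torComplex N ⋙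
      HomologicalComplex.homologyFunctor (ModuleCat.{u} R) (ComplexShape.down ℕ) n :=
  NatIso.ofComponents (fun X ↦ torIso n X N) fun f ↦ torIso_hom_naturality_left n f N

instance tor_flip_obj_linear (n : ℕ) (N : ModuleCat.{u} R) :
    ((Tor (ModuleCat.{u} R) n).flip.obj N).Linear R :=
  Functor.linear_of_iso R (torFlipIso n N).symm

theorem isHalfExact_tor_flip_obj (n : ℕ) (N : ModuleCat.{u} R) :
    IsHalfExact ((Tor (ModuleCat.{u} R) n).flip.obj N) := by
  have hhomology : IsHalfExact (torComplex N ⋙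
      HomologicalComplex.homologyFunctor (ModuleCat.{u} R) (ComplexShape.down ℕ) n) := fun S hS ↦
    (ShortComplex.ShortExact.moduleCat_exact_iff_function_exact _).mp <|
      (torComplex_shortExact hS N).homology_exact₂ n
  exact hhomology.of_iso (torFlipIso n N)

theorem isZero_tor_succ_of_flat (n : ℕ) (F : ModuleCat.{u} R) [Module.Flat R F]
    (N : ModuleCat.{u} R) : Limits.IsZero (((Tor (ModuleCat.{u} R) (n + 1)).obj F).obj N) := by
  have hexact : ((torComplex N).obj F).ExactAt (n + 1) :=
    ((projectiveResolution N).complex_exactAt_succ n).map (tensorLeft F)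
  exact hexact.isZero_homology.of_iso (torIso (n + 1) F N)

variable {S : ShortComplex (ModuleCat.{u} R)}

/-- The connecting homomorphism of the short exact sequence of complexes
`0 ⟶ X₁ ⊗ P ⟶ X₂ ⊗ P ⟶ X₃ ⊗ P ⟶ 0`. -/
def torComplexδ (hS : S.ShortExact) (n : ℕ) (N : ModuleCat.{u} R) :
    ((torComplex N).obj S.X₃).homology (n + 1) ⟶ ((torComplex N).obj S.X₁).homology n :=
  (torComplex_shortExact hS N).δ (n + 1) n rfl

theorem torComplexδ_naturality (hS : S.ShortExact) (n : ℕ) {M N : ModuleCat.{u} R} (f : M ⟶ N) :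
    torComplexδ hS n M ≫ HomologicalComplex.homologyMap ((torComplexMap f).app S.X₁) n =
      HomologicalComplex.homologyMap ((torComplexMap f).app S.X₃) (n + 1) ≫ torComplexδ hS n N :=
  HomologicalComplex.HomologySequence.δ_naturality (S.mapNatTrans (torComplexMap f))
    (torComplex_shortExact hS M) (torComplex_shortExact hS N) (n + 1) n rfl

/-- The connecting homomorphism `Tor (n + 1) X₃ ⟶ Tor n X₁` of a short exact sequence
`0 ⟶ X₁ ⟶ X₂ ⟶ X₃ ⟶ 0` in the first variable, as a natural transformation in the second. -/
def torδ (hS : S.ShortExact) (n : ℕ) :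
    (Tor (ModuleCat.{u} R) (n + 1)).obj S.X₃ ⟶ (Tor (ModuleCat.{u} R) n).obj S.X₁ where
  app N := (torIso (n + 1) S.X₃ N).hom ≫ torComplexδ hS n N ≫ (torIso n S.X₁ N).inv
  naturality M N f := by
    rw [← cancel_mono (torIso n S.X₁ N).hom]
    simp only [Category.assoc, Iso.inv_hom_id, Category.comp_id, torIso_hom_naturality_right,
      Iso.inv_hom_id_assoc, torComplexδ_naturality]
    rw [reassoc_of% torIso_hom_naturality_right]

theorem torδ_app_comp_torIso_hom (hS : S.ShortExact) (n : ℕ) (N : ModuleCat.{u} R) :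
    (torδ hS n).app N ≫ (torIso n S.X₁ N).hom =
      (torIso (n + 1) S.X₃ N).hom ≫ torComplexδ hS n N := by
  simp only [torδ, Category.assoc, Iso.inv_hom_id, Category.comp_id]

theorem torδ_exact (hS : S.ShortExact) (n : ℕ) (N : ModuleCat.{u} R) :
    Function.Exact ((torδ hS n).app N) (((Tor (ModuleCat.{u} R) n).map S.f).app N) :=
  function_exact_of_iso _ _ (torIso n S.X₂ N) (torδ_app_comp_torIso_hom hS n N)
    (torIso_hom_naturality_left n S.f N) <|
    (ShortComplex.ShortExact.moduleCat_exact_iff_function_exact _).mp <|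
      (torComplex_shortExact hS N).homology_exact₁ (n + 1) n rfl

theorem torδ_injective_of_flat (hS : S.ShortExact) [Module.Flat R S.X₂] (n : ℕ)
    (N : ModuleCat.{u} R) : Function.Injective ((torδ hS n).app N) := by
  have hzero : Limits.IsZero (((torComplex N).obj S.X₂).homology (n + 1)) :=
    (isZero_tor_succ_of_flat n S.X₂ N).of_iso (torIso (n + 1) S.X₂ N).symm
  have hmono : Mono (torComplexδ hS n N) :=
    (torComplex_shortExact hS N).mono_δ (n + 1) n rfl hzero
  rw [← ModuleCat.mono_iff_injective, torδ]
  infer_instance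

/-- `Tor 0 X N` is the tensor product `X ⊗ N`, naturally in `N`. -/
def torZeroIso (X : ModuleCat.{u} R) : (Tor (ModuleCat.{u} R) 0).obj X ≅ tensorLeft X :=
  have : Limits.PreservesFiniteColimits ((tensoringLeft (ModuleCat.{u} R)).obj X) :=
    inferInstanceAs (Limits.PreservesFiniteColimits (tensorLeft X))
  ((tensoringLeft (ModuleCat.{u} R)).obj X).leftDerivedZeroIsoSelf

instance tor_obj_preservesMonomorphisms_of_flat (n : ℕ) (F : ModuleCat.{u} R)
    [Module.Flat R F] : ((Tor (ModuleCat.{u} R) n).obj F).PreservesMonomorphisms := by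
  cases n with
  | zero => exact Functor.PreservesMonomorphisms.of_iso (torZeroIso F).symm
  | succ n => exact ⟨fun _ _ ↦ (isZero_tor_succ_of_flat n F _).mono _⟩

theorem exists_shortExact_flat (X : ModuleCat.{u} R) :
    ∃ S : ShortComplex (ModuleCat.{u} R), S.ShortExact ∧ S.X₃ = X ∧ Module.Flat R S.X₂ :=
  ⟨(Finsupp.linearCombination R (id : X → X)).shortComplexKer,
    LinearMap.shortExact_shortComplexKer
      (Finsupp.linearCombination_surjective R Function.surjective_id),
    rfl, inferInstanceAs (Module.Flat R (X →₀ R))⟩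

instance tor_obj_linear (n : ℕ) (X : ModuleCat.{u} R) :
    ((Tor (ModuleCat.{u} R) n).obj X).Linear R := by
  induction n generalizing X with
  | zero => exact Functor.linear_of_iso R (torZeroIso X).symm
  | succ n ih =>
    obtain ⟨S, hS, rfl, _⟩ := exists_shortExact_flat X
    have := ih S.X₁
    exact linear_of_injective_natTrans (torδ_injective_of_flat hS n)

theorem isHalfExact_tensorLeft (X : ModuleCat.{u} R) : IsHalfExact (tensorLeft X) := fun _ hS ↦
  lTensor_exact X ((ShortComplex.ShortExact.moduleCat_exact_iff_function_exact _).mp hS.exact)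
    hS.moduleCat_surjective_g

theorem isHalfExact_tor_obj (n : ℕ) (X : ModuleCat.{u} R) :
    IsHalfExact ((Tor (ModuleCat.{u} R) n).obj X) := by
  induction n generalizing X with
  | zero => exact (isHalfExact_tensorLeft X).of_iso (torZeroIso X)
  | succ n ih =>
    obtain ⟨S, hS, rfl, _⟩ := exists_shortExact_flat X
    exact (ih S.X₁).of_natTrans_kernel (torδ_injective_of_flat hS n) (torδ_exact hS n)

variable [IsNoetherianRing R]

theorem exists_shortExact_flat_finite (X : ModuleCat.{u} R) [Module.Finite R X] :
    ∃ S : ShortComplex (ModuleCat.{u} R), S.ShortExact ∧ S.X₃ = X ∧ Module.Flat R S.X₂ ∧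
      Module.Finite R S.X₁ := by
  obtain ⟨k, f, hf⟩ := Module.Finite.exists_fin' R X
  exact ⟨f.shortComplexKer, LinearMap.shortExact_shortComplexKer hf, rfl,
    inferInstanceAs (Module.Flat R (Fin k → R)),
    inferInstanceAs (Module.Finite R (LinearMap.ker f))⟩

theorem finite_tor (n : ℕ) (M N : ModuleCat.{u} R) [Module.Finite R M] [Module.Finite R N] :
    Module.Finite R (((Tor (ModuleCat.{u} R) n).obj M).obj N) := by
  induction n generalizing M with
  | zero =>
    have : Module.Finite R ((tensorLeft M).obj N) :=
      inferInstanceAs (Module.Finite R (TensorProduct R M N))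
    exact Module.Finite.equiv ((torZeroIso M).app N).toLinearEquiv.symm
  | succ n ih =>
    obtain ⟨S, hS, rfl, _, _⟩ := exists_shortExact_flat_finite M
    have := ih S.X₁
    exact Module.Finite.of_injective ((torδ hS n).app N).hom (torδ_injective_of_flat hS n N)

theorem pow_mem_annihilator_tor [IsLocalRing R] {d : ℕ} (hd : ringKrullDim R ≤ d) {a : R} {n : ℕ}
    (ha : ∀ M N : ModuleCat.{u} R, IsFiniteLength R M → IsFiniteLength R N →
      a ∈ Module.annihilator R (((Tor (ModuleCat.{u} R) n).obj M).obj N))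
    (M N : ModuleCat.{u} R) [Module.Finite R M] [Module.Finite R N] :
    a ^ (d + 1) ^ 2 ∈ Module.annihilator R (((Tor (ModuleCat.{u} R) n).obj M).obj N) := by
  have hdim (X : ModuleCat.{u} R) : Module.supportDim R X < (d + 1 : ℕ) :=
    ((Module.supportDim_le_ringKrullDim R X).trans hd).trans_lt (mod_cast d.lt_succ_self)
  have hfirst (Y : ModuleCat.{u} R) (hY : IsFiniteLength R Y) :
      a ^ (d + 1) ∈ Module.annihilator R (((Tor (ModuleCat.{u} R) n).obj M).obj Y) :=
    have : IsNoetherian R Y := (isFiniteLength_iff_isNoetherian_isArtinian.mp hY).1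
    (isHalfExact_tor_flip_obj n Y).pow_mem_annihilator_of_supportDim_lt
      (fun X _ ↦ finite_tor n X Y) (fun X hX ↦ ha X Y hX hY) (d + 1) M (hdim M)
  rw [sq, pow_mul]
  exact (isHalfExact_tor_obj n M).pow_mem_annihilator_of_supportDim_lt
    (fun Y _ ↦ finite_tor n M Y) hfirst (d + 1) N (hdim N)

end Tor

section TorZ

variable {R : Type} [CommRing R]

theorem torZ_natCast (n : ℕ) (M N : ModuleCat.{0} R) :
    TorZ R n M N = ((Tor (ModuleCat.{0} R) n).obj M).obj N := by
  rw [TorZ, if_pos n.cast_nonneg, Int.toNat_natCast, TorMod]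

theorem subsingleton_torZ_of_neg {n : ℤ} (hn : n < 0) (M N : ModuleCat.{0} R) :
    Subsingleton (TorZ R n M N) := by
  rw [TorZ, if_neg hn.not_ge]
  exact inferInstanceAs (Subsingleton PUnit)

end TorZ

theorem succ_sq_le_two_pow (d : ℕ) : (d + 1) ^ 2 ≤ 2 ^ (2 * d) :=
  calc (d + 1) ^ 2 ≤ (2 ^ d) ^ 2 := Nat.pow_le_pow_left d.lt_two_pow_self 2
    _ = 2 ^ (2 * d) := (pow_mul' 2 2 d).symm

theorem stmt3_general (R : Type) [CommRing R] [IsNoetherianRing R] [IsLocalRing R]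
    (d : ℕ) (hd : ringKrullDim R = (d : WithBot ℕ∞)) (a : R) (n : ℤ)
    (h : ∀ M N : ModuleCat.{0} R, IsFiniteLength R M → IsFiniteLength R N →
      ∀ x : TorZ R n M N, a • x = 0) (M N : ModuleCat.{0} R) [Module.Finite R M]
    [Module.Finite R N] (x : TorZ R n M N) : a ^ (d + 1) ^ 2 • x = 0 := by
  rcases lt_or_ge n 0 with hn | hn
  · have := subsingleton_torZ_of_neg hn M N
    exact Subsingleton.elim _ _
  · lift n to ℕ using hn
    have ha (M N : ModuleCat.{0} R) (hM : IsFiniteLength R M) (hN : IsFiniteLength R N) :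
        a ∈ Module.annihilator R (((Tor (ModuleCat.{0} R) n).obj M).obj N) := by
      rw [← torZ_natCast]
      exact Module.mem_annihilator.mpr (h M N hM hN)
    have hpow := pow_mem_annihilator_tor hd.le ha M N
    rw [← torZ_natCast] at hpow
    exact Module.mem_annihilator.mp hpow x

/-- Let `R` be a commutative noetherian local ring of Krull dimension `d`,
`a ∈ R` and `n ∈ ℤ`. If `a · Tor_i(M,N) = 0` for all `n - 2d ≤ i ≤ n` and all finite-length
modules `M, N`, then `a^(2^(2d)) · Tor_n(M,N) = 0` for all finitely generated `M, N`. -/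
theorem stmt3 (R : Type) [CommRing R] [IsNoetherianRing R] [IsLocalRing R]
    (d : ℕ) (hd : ringKrullDim R = (d : WithBot ℕ∞)) (a : R) (n : ℤ)
    (h : ∀ i : ℤ, n - 2 * d ≤ i → i ≤ n → ∀ M N : ModuleCat.{0} R,
        IsFiniteLength R M → IsFiniteLength R N → ∀ x : TorZ R i M N, a • x = 0) :
    ∀ M N : ModuleCat.{0} R, Module.Finite R M → Module.Finite R N →
      ∀ x : TorZ R n M N, (a ^ (2 ^ (2 * d))) • x = 0 := by
  intro M N _ _ x
  obtain ⟨k, hk⟩ := pow_dvd_pow a (succ_sq_le_two_pow d)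
  rw [hk, mul_comm, mul_smul, stmt3_general R d hd a n (h n (by lia) le_rfl) M N x, smul_zero]

end
end
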